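/- Let (Ω, F, (F_t)_{t≥0}) be a filtered measurable space and let P and Q be mutually absolutely continuous (equivalent) probability measures on F. For each stopping time τ, let Z_τ denote a Radon–Nikodym derivative of the restriction of Q to F_τ with respect to the restriction of P to F_τ. Let ζ = (ζ_t)_{t≥0} be a nonnegative progressively measurable process. Then ζ is of class (DL) under Q if and only if for every T ∈ (0,∞) the family {Z_τ · ζ_τ : τ ∈ T_T} is uniformly integrable under P. -/

import Mathlib

open MeasureTheory
open scoped ENNReal NNReal

/-- The family of values `{g τ : τ a stopping time, τ ≤ T}` is uniformly integrable under `μ`: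
for every `ε > 0` there is a level `K` such that `E[|g τ|; |g τ| > K] ≤ ε` uniformly over all
stopping times `τ ≤ T`. -/
def UIStopFam {Ω : Type*} {m0 : MeasurableSpace Ω} (ℱ : Filtration ℝ≥0 m0)
    (μ : Measure Ω) (g : (Ω → ℝ≥0) → Ω → ℝ) (T : ℝ≥0) : Prop :=
  ∀ ε : ℝ, 0 < ε → ∃ K : ℝ,
    ∀ τ : Ω → ℝ≥0, IsStoppingTime ℱ (fun ω => (τ ω : WithTop ℝ≥0)) → (∀ ω, τ ω ≤ T) →
      ∫⁻ ω in {ω | K < |g τ ω|}, ENNReal.ofReal |g τ ω| ∂μ ≤ ENNReal.ofReal ε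

/-- Uniform integrability for families of extended-nonnegative functions. -/
def UIAux {Ω ι : Type*} {m0 : MeasurableSpace Ω} (μ : Measure Ω) (f : ι → Ω → ℝ≥0∞) : Prop :=
  ∀ ε : ℝ≥0∞, ε ≠ 0 → ∃ M : ℝ≥0, ∀ i, ∫⁻ ω in {ω | (M : ℝ≥0∞) < f i ω}, f i ω ∂μ ≤ ε

lemma UIAux.set_le {Ω : Type*} {m0 : MeasurableSpace Ω} {μ : Measure Ω} {f : Ω → ℝ≥0∞}
    (hf : Measurable f) (M : ℝ≥0) (A : Set Ω) :
    ∫⁻ ω in A, f ω ∂μ ≤ ∫⁻ ω in {ω | (M : ℝ≥0∞) < f ω}, f ω ∂μ + M * μ A := by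
  have hS : MeasurableSet {ω | (M : ℝ≥0∞) < f ω} := measurableSet_lt measurable_const hf
  calc ∫⁻ ω in A, f ω ∂μ
      ≤ ∫⁻ ω in A, ({ω | (M : ℝ≥0∞) < f ω}.indicator f ω + M) ∂μ := by
        refine lintegral_mono fun ω => ?_
        by_cases h : (M : ℝ≥0∞) < f ω
        · rw [Set.indicator_of_mem (by exact h)]; exact le_self_add
        · exact (not_lt.1 h).trans le_add_self
    _ = ∫⁻ ω in A, {ω | (M : ℝ≥0∞) < f ω}.indicator f ω ∂μ + M * μ A := by
        rw [lintegral_add_right _ measurable_const]; simp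
    _ ≤ _ := by
        refine add_le_add ?_ le_rfl
        rw [← lintegral_indicator hS]
        exact setLIntegral_le_lintegral _ _

lemma UIAux.bdd {Ω ι : Type*} {m0 : MeasurableSpace Ω} {μ : Measure Ω} [IsProbabilityMeasure μ]
    {f : ι → Ω → ℝ≥0∞} (hf : ∀ i, Measurable (f i)) (h : UIAux μ f) :
    ∃ C : ℝ≥0, ∀ i, ∫⁻ ω, f i ω ∂μ ≤ C := by
  obtain ⟨M, hM⟩ := h 1 one_ne_zero
  refine ⟨1 + M, fun i => ?_⟩
  have := UIAux.set_le (μ := μ) (hf i) M Set.univ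
  rw [setLIntegral_univ, measure_univ, mul_one] at this
  refine this.trans ?_
  push_cast
  gcongr
  exact hM i

lemma UIAux.ac {Ω ι : Type*} {m0 : MeasurableSpace Ω} {μ : Measure Ω}
    {f : ι → Ω → ℝ≥0∞} (hf : ∀ i, Measurable (f i)) (h : UIAux μ f) {ε : ℝ≥0∞} (hε : ε ≠ 0) :
    ∃ δ : ℝ≥0∞, δ ≠ 0 ∧ ∀ i A, μ A ≤ δ → ∫⁻ ω in A, f i ω ∂μ ≤ ε := by
  have hε2 : ε / 2 ≠ 0 := (ENNReal.half_pos hε).ne'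
  obtain ⟨M, hM⟩ := h (ε / 2) hε2
  refine ⟨(ε / 2) / M, (ENNReal.div_pos hε2 ENNReal.coe_ne_top).ne', fun i A hA => ?_⟩
  refine (UIAux.set_le (hf i) M A).trans ?_
  calc _ ≤ ε / 2 + M * ((ε / 2) / M) := by gcongr; exact hM i
    _ ≤ ε / 2 + ε / 2 := by gcongr; exact ENNReal.mul_div_le
    _ = ε := ENNReal.add_halves ε

lemma ac_aux {Ω : Type*} {m0 : MeasurableSpace Ω} {μ ν : Measure Ω} [IsProbabilityMeasure μ]
    [IsProbabilityMeasure ν] (h : ν ≪ μ) {ε : ℝ≥0∞} (hε : ε ≠ 0) :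
    ∃ δ : ℝ≥0∞, δ ≠ 0 ∧ ∀ A, μ A ≤ δ → ν A ≤ ε := by
  obtain ⟨δ, hδ, H⟩ := exists_pos_setLIntegral_lt_of_measure_lt (μ := μ) (f := ν.rnDeriv μ)
    (by rw [Measure.lintegral_rnDeriv h]; simp) hε
  obtain ⟨δ', h0, h1⟩ := exists_between hδ
  refine ⟨δ', h0.ne', fun A hA => ?_⟩
  have := H A (hA.trans_lt h1)
  rw [Measure.setLIntegral_rnDeriv h] at this
  exact this.le

lemma markov_aux {Ω : Type*} {m0 : MeasurableSpace Ω} {μ : Measure Ω} {f : Ω → ℝ≥0∞}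
    (hf : Measurable f) {C L : ℝ≥0} (hL : L ≠ 0) (h : ∫⁻ ω, f ω ∂μ ≤ C) :
    μ {ω | (L : ℝ≥0∞) < f ω} ≤ C / L := by
  refine (measure_mono (t := {ω | (L : ℝ≥0∞) ≤ f ω}) fun ω hω => by
    change (L : ℝ≥0∞) < f ω at hω
    exact hω.le).trans ?_
  refine (meas_ge_le_lintegral_div hf.aemeasurable (by simpa using hL) (by simp)).trans ?_
  gcongr

lemma level_aux (C : ℝ≥0) {δ : ℝ≥0∞} (hδ : δ ≠ 0) :
    ∃ L : ℝ≥0, L ≠ 0 ∧ ∀ L', L ≤ L' → (C : ℝ≥0∞) / (L' : ℝ≥0) ≤ δ := by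
  obtain ⟨n, hn⟩ := ENNReal.exists_nat_gt (r := (C : ℝ≥0∞) / δ)
    (ENNReal.div_ne_top (by simp) hδ)
  refine ⟨n + 1, by positivity, fun L' hL => ?_⟩
  have hL' : L' ≠ 0 := (lt_of_lt_of_le (by positivity) hL).ne'
  have h2 : (n : ℝ≥0∞) ≤ (L' : ℝ≥0∞) := by
    have : (n : ℝ≥0) ≤ L' := le_trans (by simp) hL
    exact_mod_cast this
  rw [ENNReal.div_le_iff_le_mul (by simp [hL']) (by simp)]
  by_cases hδt : δ = ⊤
  · subst hδt; simp [hL']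
  have h3 := (ENNReal.div_le_iff_le_mul (Or.inl hδ) (Or.inl hδt)).1 (hn.le.trans h2)
  rwa [mul_comm] at h3

lemma change_aux {Ω : Type*} {m m0 : MeasurableSpace Ω} (hm : m ≤ m0) {P Q : Measure Ω}
    {x z : Ω → ℝ≥0∞} (hx : Measurable[m] x) (hz : Measurable[m] z)
    (hQ : ∀ A, MeasurableSet[m] A → Q A = ∫⁻ ω in A, z ω ∂P) {A : Set Ω}
    (hA : MeasurableSet[m] A) :
    ∫⁻ ω in A, x ω ∂Q = ∫⁻ ω in A, z ω * x ω ∂P := by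
  have key : Q.trim hm = (P.trim hm).withDensity z := by
    refine @Measure.ext _ m _ _ fun s hs => ?_
    rw [trim_measurableSet_eq hm hs, withDensity_apply _ hs, hQ s hs,
      restrict_trim hm _ hs, lintegral_trim hm hz]
  have hxA : Measurable[m] (A.indicator x) := hx.indicator hA
  rw [← lintegral_indicator (hm _ hA), ← lintegral_indicator (hm _ hA), ← lintegral_trim hm hxA,
    key, lintegral_withDensity_eq_lintegral_mul _ hz hxA, lintegral_trim hm (hz.mul hxA)]
  refine lintegral_congr fun ω => ?_
  by_cases h : ω ∈ A <;> simp [h]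

lemma main_aux {Ω ι : Type*} {m0 : MeasurableSpace Ω} {P Q : Measure Ω}
    [IsProbabilityMeasure P] [IsProbabilityMeasure Q] (hPQ : P ≪ Q) (hQP : Q ≪ P)
    (m : ι → MeasurableSpace Ω) (hm : ∀ i, m i ≤ m0) (x z : ι → Ω → ℝ≥0∞)
    (hx : ∀ i, Measurable[m i] (x i)) (hz : ∀ i, Measurable[m i] (z i))
    (hQ : ∀ i A, MeasurableSet[m i] A → Q A = ∫⁻ ω in A, z i ω ∂P) :
    UIAux Q x ↔ UIAux P (fun i ω => z i ω * x i ω) := by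
  have hx' : ∀ i, Measurable (x i) := fun i => (hx i).mono (hm i) le_rfl
  have hz' : ∀ i, Measurable (z i) := fun i => (hz i).mono (hm i) le_rfl
  have hzx : ∀ i, Measurable[m i] (fun ω => z i ω * x i ω) := fun i =>
    Measurable.mul (hz i) (hx i)
  have hzx' : ∀ i, Measurable (fun ω => z i ω * x i ω) := fun i => (hz' i).mul (hx' i)
  have hch : ∀ i A, MeasurableSet[m i] A → ∫⁻ ω in A, x i ω ∂Q = ∫⁻ ω in A, z i ω * x i ω ∂P :=
    fun i A hA => change_aux (hm i) (hx i) (hz i) (hQ i) hA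
  constructor
  · intro h ε hε
    obtain ⟨C, hC⟩ := h.bdd hx'
    obtain ⟨δ, hδ, H⟩ := h.ac hx' hε
    have hδ2 : δ / 2 ≠ 0 := (ENNReal.half_pos hδ).ne'
    obtain ⟨δ', hδ', H'⟩ := ac_aux hQP hδ2
    obtain ⟨L1, hL1, hL1'⟩ := level_aux C hδ2
    obtain ⟨L2, hL2, hL2'⟩ := level_aux 1 hδ'
    set L := max L1 L2 with hLdef
    have hL : L ≠ 0 := (lt_of_lt_of_le (pos_iff_ne_zero.2 hL1) (le_max_left _ _)).ne'
    refine ⟨L * L, fun i => ?_⟩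
    have hS : MeasurableSet[m i] {ω | ((L * L : ℝ≥0) : ℝ≥0∞) < z i ω * x i ω} :=
      hzx i measurableSet_Ioi
    rw [← hch i _ hS]
    refine H i _ ?_
    have hsub : {ω | ((L * L : ℝ≥0) : ℝ≥0∞) < z i ω * x i ω} ⊆
        {ω | (L : ℝ≥0∞) < z i ω} ∪ {ω | (L : ℝ≥0∞) < x i ω} := by
      intro ω hω
      by_contra hcon
      simp only [Set.mem_union, Set.mem_ofPred_eq, not_or, not_lt] at hcon hω
      refine absurd hω (not_lt.2 ?_)
      push_cast
      exact mul_le_mul' hcon.1 hcon.2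
    refine (measure_mono hsub).trans ((measure_union_le _ _).trans ?_)
    rw [← ENNReal.add_halves δ]
    have hz1 : ∫⁻ ω, z i ω ∂P ≤ (1 : ℝ≥0) := by
      have := hQ i Set.univ (@MeasurableSet.univ _ (m i))
      rw [measure_univ, setLIntegral_univ] at this
      rw [← this]; simp
    gcongr
    · exact H' _ ((markov_aux (hz' i) hL hz1).trans (hL2' L (le_max_right _ _)))
    · exact (markov_aux (hx' i) hL (hC i)).trans (hL1' L (le_max_left _ _))
  · intro h ε hε
    obtain ⟨C, hC⟩ := h.bdd hzx'
    obtain ⟨δ, hδ, H⟩ := h.ac hzx' hε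
    obtain ⟨δ', hδ', H'⟩ := ac_aux hPQ hδ
    obtain ⟨L, hL, hL'⟩ := level_aux C hδ'
    refine ⟨L, fun i => ?_⟩
    have hS : MeasurableSet[m i] {ω | (L : ℝ≥0∞) < x i ω} := hx i measurableSet_Ioi
    rw [hch i _ hS]
    refine H i _ (H' _ ?_)
    refine (markov_aux (hx' i) hL ?_).trans (hL' L le_rfl)
    have := hch i Set.univ (@MeasurableSet.univ _ (m i))
    rw [setLIntegral_univ, setLIntegral_univ] at this
    rw [this]
    exact hC i

lemma UIStopFam_iff {Ω : Type*} {m0 : MeasurableSpace Ω} (ℱ : Filtration ℝ≥0 m0)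
    (μ : Measure Ω) (g : (Ω → ℝ≥0) → Ω → ℝ) (T : ℝ≥0) :
    UIStopFam ℱ μ g T ↔ UIAux μ
      (fun (i : {τ : Ω → ℝ≥0 // IsStoppingTime ℱ (fun ω => (τ ω : WithTop ℝ≥0)) ∧ ∀ ω, τ ω ≤ T}) ω =>
        ENNReal.ofReal |g i.1 ω|) := by
  constructor
  · intro h ε hε
    obtain ⟨r, hr0, hr⟩ : ∃ r : ℝ, 0 < r ∧ ENNReal.ofReal r ≤ ε := by
      by_cases ht : ε = ⊤
      · exact ⟨1, one_pos, by simp [ht]⟩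
      · exact ⟨ε.toReal, ENNReal.toReal_pos hε ht, by rw [ENNReal.ofReal_toReal ht]⟩
    obtain ⟨K, hK⟩ := h r hr0
    refine ⟨K.toNNReal, fun i => ?_⟩
    refine le_trans ?_ ((hK i.1 i.2.1 i.2.2).trans hr)
    refine lintegral_mono_set fun ω hω => ?_
    change ENNReal.ofReal K < ENNReal.ofReal _ at hω
    exact (ENNReal.ofReal_lt_ofReal_iff'.1 hω).1
  · intro h ε hε
    obtain ⟨M, hM⟩ := h (ENNReal.ofReal ε) (by simpa using hε)
    refine ⟨M, fun τ h1 h2 => ?_⟩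
    refine le_trans ?_ (hM ⟨τ, h1, h2⟩)
    refine lintegral_mono_set fun ω hω => ?_
    change (M : ℝ) < _ at hω
    change (M : ℝ≥0∞) < ENNReal.ofReal _
    rw [← ENNReal.ofReal_coe_nnreal]
    exact (ENNReal.ofReal_lt_ofReal_iff (lt_of_le_of_lt M.2 hω)).2 hω

/-- Let `P` and `Q` be equivalent probability measures on a filtered space,
and for each stopping time `τ` let `Z τ` be a Radon–Nikodym derivative of `Q` restricted to
`F_τ` with respect to `P` restricted to `F_τ` (i.e. `Z τ` is `F_τ`-measurable, `P`-a.e.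
nonnegative, and `Q(A) = ∫_A Z τ dP` for all `A ∈ F_τ`). Let `ζ` be a nonnegative progressively
measurable process. Then `ζ` is of class (DL) under `Q` if and only if for every `T ∈ (0,∞)`
the family `{Z_τ · ζ_τ : τ ∈ 𝒯_T}` is uniformly integrable under `P`. -/
theorem classDL_iff_density_family_UI
    {Ω : Type*} {m0 : MeasurableSpace Ω} (ℱ : Filtration ℝ≥0 m0)
    (P Q : Measure Ω) [IsProbabilityMeasure P] [IsProbabilityMeasure Q]
    (hPQ : P ≪ Q) (hQP : Q ≪ P)
    (Z : (Ω → ℝ≥0) → Ω → ℝ)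
    (hZ : ∀ τ : Ω → ℝ≥0, ∀ hτ : IsStoppingTime ℱ (fun ω => (τ ω : WithTop ℝ≥0)),
      Measurable[hτ.measurableSpace] (Z τ) ∧
      (∀ᵐ ω ∂P, 0 ≤ Z τ ω) ∧
      ∀ A : Set Ω, MeasurableSet[hτ.measurableSpace] A →
        Q A = ∫⁻ ω in A, ENNReal.ofReal (Z τ ω) ∂P)
    (ζ : ℝ≥0 → Ω → ℝ) (hζ : ProgMeasurable ℱ ζ)
    (hζnonneg : ∀ t ω, 0 ≤ ζ t ω) :
    (∀ T : ℝ≥0, 0 < T → UIStopFam ℱ Q (fun τ => stoppedValue ζ (fun ω => (τ ω : WithTop ℝ≥0))) T) ↔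
    (∀ T : ℝ≥0, 0 < T →
      UIStopFam ℱ P (fun τ ω => Z τ ω * stoppedValue ζ (fun ω => (τ ω : WithTop ℝ≥0)) ω) T) := by
  refine forall_congr' fun T => forall_congr' fun _ => ?_
  rw [UIStopFam_iff, UIStopFam_iff]
  have hmeas : ∀ τ : Ω → ℝ≥0, ∀ hτ : IsStoppingTime ℱ (fun ω => (τ ω : WithTop ℝ≥0)),
      Measurable[hτ.measurableSpace] (stoppedValue ζ (fun ω => (τ ω : WithTop ℝ≥0))) :=
    fun τ hτ => measurable_stoppedValue hζ hτ
  have := main_aux hPQ hQP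
    (ι := {τ : Ω → ℝ≥0 // IsStoppingTime ℱ (fun ω => (τ ω : WithTop ℝ≥0)) ∧ ∀ ω, τ ω ≤ T})
    (fun i => i.2.1.measurableSpace) (fun i => i.2.1.measurableSpace_le)
    (fun i ω => ENNReal.ofReal |stoppedValue ζ (fun ω => (i.1 ω : WithTop ℝ≥0)) ω|)
    (fun i ω => ENNReal.ofReal |Z i.1 ω|)
    (fun i => ENNReal.measurable_ofReal.comp (measurable_norm.comp (hmeas i.1 i.2.1)))
    (fun i => ENNReal.measurable_ofReal.comp (measurable_norm.comp (hZ i.1 i.2.1).1))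
    (fun i A hA => by
      rw [(hZ i.1 i.2.1).2.2 A hA]
      refine lintegral_congr_ae (ae_restrict_of_ae ?_)
      filter_upwards [(hZ i.1 i.2.1).2.1] with ω hω
      rw [abs_of_nonneg hω])
  rw [this]
  simp only [abs_mul, ENNReal.ofReal_mul (abs_nonneg _)]
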